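/- Let (X, 𝓑, 𝐛) be a coarse proximity space and φ the induced relation (A φ B iff every unbounded B' ⊆ B satisfies A 𝐛 B' and every unbounded A' ⊆ A satisfies A' 𝐛 B). If A, B, C, D ⊆ X satisfy A φ C and B φ D, then A 𝐛 B if and only if C 𝐛 D. -/

import Mathlib

/-!
Closeness is monotone by the union axiom. If `A` is close to `B` and every unbounded subset of `A`
is close to `C`, then `C` is close to `B`: otherwise the strong axiom gives `E` with `C` far from
`E` and `Eᶜ` far from `B`. Then `A ∩ E` must be bounded, hence far from `B`, and `A \ E ⊆ Eᶜ` is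
also far from `B`, so `A` is far from `B`. Applying this in each variable, and to both halves of
the relation `φ`, gives the equivalence.
-/

/-- A coarse proximity space: a set `X` with a bornology `bdd` and a relation `rel`
on subsets of `X` satisfying the axioms of a coarse proximity. Here `X \ E` is `Eᶜ`. -/
structure CoarseProx (X : Type*) where
  bdd : Set (Set X)
  singleton_bdd : ∀ x : X, {x} ∈ bdd
  subset_bdd : ∀ ⦃A B : Set X⦄, A ∈ bdd → B ⊆ A → B ∈ bdd
  union_bdd : ∀ ⦃A B : Set X⦄, A ∈ bdd → B ∈ bdd → A ∪ B ∈ bdd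
  rel : Set X → Set X → Prop
  symm : ∀ ⦃A B : Set X⦄, rel A B → rel B A
  union_iff : ∀ A B C : Set X, rel (A ∪ B) C ↔ rel A C ∨ rel B C
  unbounded_of_rel : ∀ ⦃A B : Set X⦄, rel A B → A ∉ bdd ∧ B ∉ bdd
  strong : ∀ ⦃A B : Set X⦄, ¬ rel A B → ∃ E : Set X, ¬ rel A E ∧ ¬ rel Eᶜ B
  rel_of_inter : ∀ ⦃A B : Set X⦄, A ∩ B ∉ bdd → rel A B

/-- `B` is a coarse neighborhood of `A`, written `A ≪ B`. -/
def CoarseProx.nbhd {X : Type*} (P : CoarseProx X) (A B : Set X) : Prop :=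
  ¬ P.rel A Bᶜ


/-- The weak asymptotic resemblance induced by a coarse proximity. -/
def CoarseProx.phi {X : Type*} (P : CoarseProx X) (A B : Set X) : Prop :=
  (∀ Bp ⊆ B, Bp ∉ P.bdd → P.rel A Bp) ∧ (∀ Ap ⊆ A, Ap ∉ P.bdd → P.rel Ap B)

theorem CoarseProx.rel_mono_left {X : Type*} (P : CoarseProx X) {A A' B : Set X}
    (h : P.rel A B) (hs : A ⊆ A') : P.rel A' B := by
  rw [← Set.union_eq_self_of_subset_left hs]
  exact (P.union_iff _ _ _).2 (Or.inl h)

/-- One half of `φ` suffices to transport closeness in the first variable. -/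
theorem CoarseProx.rel_transport_left {X : Type*} (P : CoarseProx X) {A B C : Set X}
    (hAC : ∀ S ⊆ A, S ∉ P.bdd → P.rel S C) (h : P.rel A B) : P.rel C B := by
  by_contra hCB
  obtain ⟨E, hCE, hEB⟩ := P.strong hCB
  rw [← Set.inter_union_compl A E] at h
  rcases (P.union_iff _ _ _).1 h with h1 | h1
  · have h2 := hAC (A ∩ E) Set.inter_subset_left (P.unbounded_of_rel h1).1
    exact hCE (P.symm (P.rel_mono_left h2 Set.inter_subset_right))
  · exact hEB (P.rel_mono_left h1 Set.inter_subset_right)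

/-- coarse closeness only depends on φ classes. -/
theorem rel_congr_phi {X : Type*} (P : CoarseProx X) (A B C D : Set X)
    (hAC : P.phi A C) (hBD : P.phi B D) : P.rel A B ↔ P.rel C D := by
  constructor
  · intro h
    have h1 := P.rel_transport_left hAC.2 h
    exact P.symm (P.rel_transport_left hBD.2 (P.symm h1))
  · intro h
    have h1 := P.rel_transport_left (fun S hS hu => P.symm (hAC.1 S hS hu)) h
    exact P.symm (P.rel_transport_left (fun S hS hu => P.symm (hBD.1 S hS hu)) (P.symm h1))
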